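/- For any positive integer k, the domination ratio of Γ(ℤ, {1, 3k+1}) equals (k+1)/(3k+2), and the domination ratio of Γ(ℤ, {1, -3k}) also equals (k+1)/(3k+2). -/

import Mathlib

open Filter

/-- Lower density of a set of integers. -/
noncomputable def lowerDensity (D : Set ℤ) : ℝ :=
  Filter.liminf (fun n : ℕ =>
    ((D ∩ Set.Icc (-(n : ℤ)) (n : ℤ)).ncard : ℝ) / (2 * (n : ℝ) + 1)) Filter.atTop

/-- `D` is a dominating set of the integer distance digraph `Γ(ℤ,S)`. -/
def Dominating (S D : Set ℤ) : Prop :=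
  ∀ m : ℤ, m ∈ D ∨ ∃ u ∈ D, ∃ s ∈ S, m = u + s

/-- Domination ratio of `Γ(ℤ,S)`. -/
noncomputable def dominationRatio (S : Set ℤ) : ℝ :=
  sInf (lowerDensity '' {D : Set ℤ | Dominating S D})

/-- `D` is an efficient dominating set of `Γ(ℤ,S)`: every integer is dominated
by exactly one element of `D`. -/
def EffDominating (S D : Set ℤ) : Prop :=
  ∀ m : ℤ, ∃! u, u ∈ D ∧ (u = m ∨ m - u ∈ S)

/-!
Let `D` dominate `Γ(ℤ, {1, 3k+1})`, put `n = 3k+2`, and let `W a` be the number of elements of `D`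
in `[a, a + n)`. Every integer of `[a, a + n)` is dominated, so `W a + W (a - 1) + W (a - (n - 1))`
is at least `n`, and more than `n` if one of them is dominated twice. As `W a` and `W (a - 1)`
differ by at most one, this shows that a window with fewer than `k + 1` elements is compensated by
the one `n - 1` places to its left: `W a + W (a - (n - 1)) ≥ 2 (k + 1)`. Hence `W` is on average at
least `k + 1`, and the density of `D` is at least `(k + 1) / n`. Equality holds for the set of
integers whose residue modulo `n` is a multiple of `3`. Finally `D` dominates `Γ(ℤ, {s, s - t})`
exactly when `-D` dominates `Γ(ℤ, {s, t})`, and `-3k = 1 - (3k + 1)`.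
-/

/-- The sum of `f` over the `n` consecutive integers `x, …, x + n - 1`. -/
def windowSum {R : Type*} [AddCommMonoid R] (f : ℤ → R) (x : ℤ) (n : ℕ) : R :=
  ∑ i ∈ Finset.range n, f (x + i)

section AddCommMonoid

variable {R : Type*} [AddCommMonoid R]

lemma windowSum_const (c : R) (x : ℤ) (n : ℕ) : windowSum (fun _ => c) x n = n • c := by
  simp [windowSum]

lemma windowSum_one (f : ℤ → R) (x : ℤ) : windowSum f x 1 = f x := by
  simp [windowSum]

lemma windowSum_add_fun (f g : ℤ → R) (x : ℤ) (n : ℕ) :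
    windowSum (fun y => f y + g y) x n = windowSum f x n + windowSum g x n :=
  Finset.sum_add_distrib

lemma windowSum_comp_sub (f : ℤ → R) (t x : ℤ) (n : ℕ) :
    windowSum (fun y => f (y - t)) x n = windowSum f (x - t) n := by
  simp only [windowSum, add_sub_right_comm]

lemma windowSum_add_length (f : ℤ → R) (x : ℤ) (m n : ℕ) :
    windowSum f x (m + n) = windowSum f x m + windowSum f (x + m) n := by
  simp only [windowSum, Finset.sum_range_add, Nat.cast_add, add_assoc]

lemma windowSum_windowSum_comm (f : ℤ → R) (x : ℤ) (m n : ℕ) :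
    windowSum (fun a => windowSum f a m) x n = windowSum (fun a => windowSum f a n) x m := by
  simp only [windowSum]
  rw [Finset.sum_comm]
  simp only [add_right_comm]

end AddCommMonoid

section AddCommGroup

variable {R : Type*} [AddCommGroup R]

lemma windowSum_sub_fun (f g : ℤ → R) (x : ℤ) (n : ℕ) :
    windowSum (fun y => f y - g y) x n = windowSum f x n - windowSum g x n :=
  Finset.sum_sub_distrib _ _

lemma windowSum_add_sub_windowSum (f : ℤ → R) (x : ℤ) (m n : ℕ) :
    windowSum f (x + m) n - windowSum f x n = windowSum f (x + n) m - windowSum f x m := by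
  rw [sub_eq_sub_iff_add_eq_add, add_comm, ← windowSum_add_length, add_comm m,
    windowSum_add_length, add_comm]

lemma windowSum_eq_of_periodic {f : ℤ → R} {n : ℕ} (hf : Function.Periodic f n)
    (x y : ℤ) : windowSum f x n = windowSum f y n := by
  have hper : Function.Periodic (fun x => windowSum f x n) 1 := fun x => by
    simpa [windowSum_one, hf x, sub_eq_zero] using windowSum_add_sub_windowSum f x 1 n
  simpa using (hper.int_mul_eq x).trans (hper.int_mul_eq y).symm

end AddCommGroup

section OrderedAddCommMonoid

variable {R : Type*} [AddCommMonoid R] [PartialOrder R] [IsOrderedAddMonoid R] {f g : ℤ → R} {B : R}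

lemma windowSum_mono (h : ∀ y, f y ≤ g y) (x : ℤ) (n : ℕ) : windowSum f x n ≤ windowSum g x n :=
  Finset.sum_le_sum fun _ _ => h _

lemma windowSum_nonneg (h : ∀ y, 0 ≤ f y) (x : ℤ) (n : ℕ) : 0 ≤ windowSum f x n :=
  Finset.sum_nonneg fun _ _ => h _

lemma windowSum_le_nsmul (h : ∀ y, f y ≤ B) (x : ℤ) (n : ℕ) : windowSum f x n ≤ n • B :=
  (windowSum_mono h x n).trans_eq (windowSum_const B x n)

end OrderedAddCommMonoid

section LinearOrderedAddCommGroup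

variable {R : Type*} [AddCommGroup R] [LinearOrder R] [IsOrderedAddMonoid R] {f : ℤ → R} {B : R}

lemma abs_windowSum_add_sub_le (h0 : ∀ y, 0 ≤ f y) (hB : ∀ y, f y ≤ B) (x : ℤ) (m n : ℕ) :
    |windowSum f (x + m) n - windowSum f x n| ≤ m • B := by
  rw [windowSum_add_sub_windowSum]
  exact abs_sub_le_of_nonneg_of_le (windowSum_nonneg h0 _ _) (windowSum_le_nsmul hB _ _)
    (windowSum_nonneg h0 _ _) (windowSum_le_nsmul hB _ _)

lemma abs_windowSum_windowSum_sub_le (h0 : ∀ y, 0 ≤ f y) (hB : ∀ y, f y ≤ B) (x : ℤ) (m n : ℕ) :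
    |windowSum (fun a => windowSum f a m) x n - m • windowSum f x n| ≤ (m * m) • B := by
  have hB0 : 0 ≤ B := (h0 0).trans (hB 0)
  rw [windowSum_windowSum_comm, ← windowSum_const _ x m, ← windowSum_sub_fun, mul_nsmul]
  calc |∑ j ∈ Finset.range m, (windowSum f (x + j) n - windowSum f x n)|
      ≤ ∑ j ∈ Finset.range m, |windowSum f (x + j) n - windowSum f x n| :=
        Finset.abs_sum_le_sum_abs _ _
    _ ≤ (Finset.range m).card • (m • B) := Finset.sum_le_card_nsmul _ _ _ fun j hj =>
        (abs_windowSum_add_sub_le h0 hB x j n).trans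
          (nsmul_le_nsmul_left hB0 (Finset.mem_range.1 hj).le)
    _ = m • (m • B) := by rw [Finset.card_range]

/-- Under `hs`, `f` is at least the difference of its positive part and its positive part
shifted by `s`, and the window sums of that difference telescope. -/
lemma neg_nsmul_le_windowSum (hB : ∀ a, f a ≤ B) (s : ℕ)
    (hs : ∀ a, f a < 0 → 0 ≤ f a + f (a - s)) (x : ℤ) (n : ℕ) :
    -(s • B) ≤ windowSum f x n := by
  have hB0 : 0 ≤ B := by
    by_contra! hneg
    have hf (a : ℤ) : f a < 0 := (hB a).trans_lt hneg
    exact (hs 0 (hf 0)).not_gt (add_neg (hf 0) (hf _))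
  have hpoint : ∀ a, (f a)⁺ - (f (a - s))⁺ ≤ f a := fun a => by
    rcases lt_or_ge (f a) 0 with ha | ha
    · rw [posPart_of_nonpos ha.le, zero_sub, neg_le_iff_add_nonneg]
      exact (hs a ha).trans (add_le_add_right (le_posPart _) _)
    · rw [posPart_of_nonneg ha]
      exact sub_le_self _ (posPart_nonneg _)
  have hshift := abs_windowSum_add_sub_le (fun a => posPart_nonneg (f a))
    (fun a => sup_le (hB a) hB0) (x - s) s n
  rw [sub_add_cancel] at hshift
  calc -(s • B)
      ≤ windowSum (fun a => (f a)⁺) x n - windowSum (fun a => (f a)⁺) (x - s) n :=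
        (abs_le.1 hshift).1
    _ = windowSum (fun a => (f a)⁺ - (f (a - s))⁺) x n := by
        rw [windowSum_sub_fun, windowSum_comp_sub fun a => (f a)⁺]
    _ ≤ windowSum f x n := windowSum_mono hpoint x n

end LinearOrderedAddCommGroup

/-- The number of elements of `D` among the `n` consecutive integers `x, …, x + n - 1`, taken in
`ℤ` so that counts can be subtracted. -/
noncomputable def windowCount (D : Set ℤ) (x : ℤ) (n : ℕ) : ℤ :=
  windowSum (D.indicator 1) x n

section Density

lemma indicator_one_nonneg (D : Set ℤ) (x : ℤ) : (0 : ℤ) ≤ D.indicator 1 x :=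
  Set.indicator_nonneg (fun _ _ => zero_le_one) x

lemma indicator_one_le_one (D : Set ℤ) (x : ℤ) : D.indicator 1 x ≤ (1 : ℤ) :=
  Set.indicator_apply_le' (fun _ => le_rfl) fun _ => zero_le_one

lemma windowCount_le (D : Set ℤ) (x : ℤ) (n : ℕ) : windowCount D x n ≤ n := by
  simpa [windowCount] using windowSum_le_nsmul (indicator_one_le_one D) x n

lemma windowCount_add_one (D : Set ℤ) (x : ℤ) (n : ℕ) :
    windowCount D (x + 1) n = windowCount D x n + D.indicator 1 (x + n) - D.indicator 1 x := by
  have h := windowSum_add_sub_windowSum (D.indicator (1 : ℤ → ℤ)) x 1 n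
  rw [windowSum_one, windowSum_one, Nat.cast_one] at h
  unfold windowCount
  linarith

lemma ncard_inter_Ico (D : Set ℤ) (x : ℤ) (n : ℕ) :
    ((D ∩ Set.Ico x (x + n)).ncard : ℤ) = windowCount D x n := by
  classical
  have hcoe : D ∩ Set.Ico x (x + n) = ↑{y ∈ Finset.Ico x (x + n) | y ∈ D} := by
    ext y
    simp only [Set.mem_inter_iff, Set.mem_Ico, Finset.coe_filter, Finset.mem_Ico, Set.mem_ofPred_eq]
    tauto
  rw [hcoe, Set.ncard_coe_finset, Finset.natCast_card_filter, Int.Ico_eq_finset_map,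
    Finset.sum_map]
  simp [windowCount, windowSum, Set.indicator_apply]

lemma ncard_inter_Icc_neg (D : Set ℤ) (N : ℕ) :
    ((D ∩ Set.Icc (-(N : ℤ)) N).ncard : ℤ) = windowCount D (-N) (2 * N + 1) := by
  rw [← ncard_inter_Ico]
  congr 3
  ext y
  simp only [Set.mem_Icc, Set.mem_Ico]
  omega

lemma ncard_inter_Icc_neg_div_le_one (D : Set ℤ) (N : ℕ) :
    ((D ∩ Set.Icc (-(N : ℤ)) N).ncard : ℝ) / (2 * (N : ℝ) + 1) ≤ 1 := by
  have h := windowCount_le D (-N) (2 * N + 1)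
  rw [← ncard_inter_Icc_neg] at h
  rw [div_le_one (by positivity)]
  exact_mod_cast h

open scoped Pointwise in
lemma lowerDensity_neg (D : Set ℤ) : lowerDensity (-D) = lowerDensity D := by
  have hcard (N : ℕ) : (-D ∩ Set.Icc (-(N : ℤ)) N).ncard = (D ∩ Set.Icc (-(N : ℤ)) N).ncard := by
    rw [← Set.ncard_image_of_injective _ neg_injective, Set.image_neg_eq_neg, Set.inter_neg,
      neg_neg, Set.neg_Icc, neg_neg]
  simp only [lowerDensity, hcard]

lemma tendsto_add_div_two_mul_add_one (ρ C : ℝ) :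
    Tendsto (fun N : ℕ => ρ + C / (2 * (N : ℝ) + 1)) atTop (nhds ρ) := by
  have h : Tendsto (fun N : ℕ => 2 * (N : ℝ) + 1) atTop atTop :=
    tendsto_atTop_add_const_right _ _ (tendsto_natCast_atTop_atTop.const_mul_atTop two_pos)
  simpa using tendsto_const_nhds.add (h.const_div_atTop C)

variable {D : Set ℤ}

lemma le_lowerDensity {ρ C : ℝ}
    (h : ∀ N : ℕ, ρ * (2 * N + 1) + C ≤ (D ∩ Set.Icc (-(N : ℤ)) N).ncard) :
    ρ ≤ lowerDensity D := by
  have ht := tendsto_add_div_two_mul_add_one ρ C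
  rw [← ht.liminf_eq]
  refine liminf_le_liminf (Eventually.of_forall fun N => ?_) ht.isBoundedUnder_ge
    (isBoundedUnder_of ⟨1, ncard_inter_Icc_neg_div_le_one D⟩).isCoboundedUnder_ge
  rw [le_div_iff₀ (by positivity), add_mul, div_mul_cancel₀ _ (by positivity)]
  exact h N

lemma lowerDensity_le {ρ C : ℝ}
    (h : ∀ N : ℕ, ((D ∩ Set.Icc (-(N : ℤ)) N).ncard : ℝ) ≤ ρ * (2 * N + 1) + C) :
    lowerDensity D ≤ ρ := by
  have ht := tendsto_add_div_two_mul_add_one ρ C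
  rw [← ht.liminf_eq]
  refine liminf_le_liminf (Eventually.of_forall fun N => ?_)
    (isBoundedUnder_of ⟨0, fun N => by positivity⟩) ht.isBoundedUnder_le.isCoboundedUnder_ge
  rw [div_le_iff₀ (by positivity), add_mul, div_mul_cancel₀ _ (by positivity)]
  exact h N

lemma abs_windowSum_windowCount_sub_le (D : Set ℤ) (q N : ℕ) :
    |windowSum (fun a => windowCount D a q) (-N) (2 * N + 1)
      - q * ((D ∩ Set.Icc (-(N : ℤ)) N).ncard : ℤ)| ≤ q * q := by
  rw [ncard_inter_Icc_neg]
  simpa [windowCount] using abs_windowSum_windowSum_sub_le (indicator_one_nonneg D)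
    (indicator_one_le_one D) (-N) q (2 * N + 1)

lemma div_le_lowerDensity_of_le_windowSum {p C : ℤ} {q : ℕ} (hq : 0 < q)
    (h : ∀ (x : ℤ) (n : ℕ), p * n - C ≤ windowSum (fun a => windowCount D a q) x n) :
    (p : ℝ) / q ≤ lowerDensity D := by
  refine le_lowerDensity (C := -(C + q * q) / q) fun N => ?_
  have hq_pos : (0 : ℝ) < q := by exact_mod_cast hq
  have hcount : p * (2 * N + 1) - (C + q * q) ≤ q * ((D ∩ Set.Icc (-(N : ℤ)) N).ncard : ℤ) := by
    have hsum := h (-N) (2 * N + 1)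
    have habs := (abs_le.1 (abs_windowSum_windowCount_sub_le D q N)).2
    push_cast at hsum
    linarith
  rw [div_mul_eq_mul_div, ← add_div, div_le_iff₀' hq_pos, ← sub_eq_add_neg]
  exact_mod_cast hcount

lemma lowerDensity_le_div_of_windowCount_le {p : ℤ} {q : ℕ} (hq : 0 < q)
    (h : ∀ x, windowCount D x q ≤ p) : lowerDensity D ≤ (p : ℝ) / q := by
  refine lowerDensity_le (C := (q * q) / q) fun N => ?_
  have hq_pos : (0 : ℝ) < q := by exact_mod_cast hq
  have hcount : q * ((D ∩ Set.Icc (-(N : ℤ)) N).ncard : ℤ) ≤ p * (2 * N + 1) + q * q := by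
    have hsum := windowSum_le_nsmul h (-N) (2 * N + 1)
    have habs := (abs_le.1 (abs_windowSum_windowCount_sub_le D q N)).1
    rw [nsmul_eq_mul] at hsum
    push_cast at hsum
    linarith
  rw [div_mul_eq_mul_div, ← add_div, le_div_iff₀' hq_pos]
  exact_mod_cast hcount

end Density

section Pair

variable {s t : ℤ} {D : Set ℤ}

lemma dominating_pair_iff :
    Dominating {s, t} D ↔ ∀ m, m ∈ D ∨ m - s ∈ D ∨ m - t ∈ D := by
  simp [Dominating, ← sub_eq_iff_eq_add, and_or_left, exists_or, eq_comm]

open scoped Pointwise in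
lemma dominating_pair_neg_iff : Dominating {s, t} (-D) ↔ Dominating {s, s - t} D := by
  simp only [dominating_pair_iff, Set.mem_neg]
  rw [← (Equiv.subLeft s).forall_congr_right]
  refine forall_congr' fun m => ?_
  have hs : -(s - m - s) = m := by ring
  have ht : -(s - m - t) = m - (s - t) := by ring
  rw [Equiv.subLeft_apply, neg_sub, hs, ht]
  exact or_left_comm

open scoped Pointwise in
lemma dominationRatio_pair_sub (s t : ℤ) :
    dominationRatio {s, s - t} = dominationRatio {s, t} := by
  unfold dominationRatio
  congr 1
  ext ρ
  simp only [Set.mem_image]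
  rw [neg_surjective.exists]
  simp [lowerDensity_neg, dominating_pair_neg_iff]

/-- The number of times `m` is dominated by `D` in `Γ(ℤ, {s, t})`, an element of `D` counting
once for each of `0`, `s`, `t` that leads from it to `m`. -/
noncomputable def dominationCount (s t : ℤ) (D : Set ℤ) (m : ℤ) : ℤ :=
  D.indicator 1 m + D.indicator 1 (m - s) + D.indicator 1 (m - t)

lemma windowSum_dominationCount (s t : ℤ) (D : Set ℤ) (a : ℤ) (n : ℕ) :
    windowSum (dominationCount s t D) a n
      = windowCount D a n + windowCount D (a - s) n + windowCount D (a - t) n := by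
  unfold dominationCount windowCount
  rw [windowSum_add_fun, windowSum_add_fun, windowSum_comp_sub, windowSum_comp_sub]

lemma Dominating.one_le_dominationCount (hD : Dominating {s, t} D) (m : ℤ) :
    1 ≤ dominationCount s t D m := by
  have h0 := indicator_one_nonneg D m
  have hs := indicator_one_nonneg D (m - s)
  have ht := indicator_one_nonneg D (m - t)
  unfold dominationCount
  rcases dominating_pair_iff.1 hD m with h | h | h <;>
    have h1 := (Set.indicator_eq_one_iff_mem ℤ).2 h <;> omega

lemma Dominating.le_windowCount_add (hD : Dominating {s, t} D) (a : ℤ) (n : ℕ) :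
    (n : ℤ) ≤ windowCount D a n + windowCount D (a - s) n + windowCount D (a - t) n := by
  rw [← windowSum_dominationCount]
  simpa [windowSum_const] using windowSum_mono hD.one_le_dominationCount a n

lemma Dominating.lt_windowCount_add (hD : Dominating {s, t} D) {a m : ℤ} {n : ℕ}
    (hm : m ∈ Set.Ico a (a + n)) (h2 : 2 ≤ dominationCount s t D m) :
    (n : ℤ) < windowCount D a n + windowCount D (a - s) n + windowCount D (a - t) n := by
  rw [← windowSum_dominationCount]
  obtain ⟨j, rfl⟩ := Int.le.dest hm.1
  have hj : j < n := by simpa using hm.2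
  have hlt := Finset.sum_lt_sum (s := Finset.range n)
    (fun i _ => hD.one_le_dominationCount (a + i)) ⟨j, Finset.mem_range.2 hj, h2⟩
  simpa [windowSum] using hlt

lemma Dominating.exists_two_le_dominationCount (ht : 1 ≤ t) (hD : Dominating {1, t} D) {a : ℤ}
    (hleft : a - 1 ∈ D) (hright : a + t ∉ D) :
    ∃ m ∈ Set.Ico a (a + t), 2 ≤ dominationCount 1 t D m := by
  by_cases ha : a ∈ D
  · refine ⟨a, ⟨le_rfl, by omega⟩, ?_⟩
    rw [dominationCount, (Set.indicator_eq_one_iff_mem ℤ).2 ha,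
      (Set.indicator_eq_one_iff_mem ℤ).2 hleft]
    linarith [indicator_one_nonneg D (a - t)]
  · have hlast : a + t - 1 ∈ D := by
      simpa [hright, ha] using dominating_pair_iff.1 hD (a + t)
    refine ⟨a + t - 1, ⟨by omega, by omega⟩, ?_⟩
    have hstep : a + t - 1 - t = a - 1 := by ring
    rw [dominationCount, hstep, (Set.indicator_eq_one_iff_mem ℤ).2 hlast,
      (Set.indicator_eq_one_iff_mem ℤ).2 hleft]
    linarith [indicator_one_nonneg D (a + t - 1 - 1)]

end Pair

section LowerBound

variable {k : ℕ} {D : Set ℤ}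

/-- When two of the three windows in `Dominating.le_windowCount_add` hold `k` and `k + 1` elements,
that inequality alone misses the claim by one. The element `a - 1` that is then lost on moving from
the window at `a - 1` to the one at `a` is the source of a doubly dominated integer. -/
lemma Dominating.le_windowCount_add_windowCount (hD : Dominating {1, 3 * (k : ℤ) + 1} D) {a : ℤ}
    (ha : windowCount D a (3 * k + 2) < k + 1) :
    2 * ((k : ℤ) + 1) ≤
      windowCount D a (3 * k + 2) + windowCount D (a - (3 * k + 1)) (3 * k + 2) := by
  have hle := hD.le_windowCount_add a (3 * k + 2)
  push_cast at hle
  by_cases hprev : windowCount D (a - 1) (3 * k + 2) ≤ k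
  · omega
  have hstep := windowCount_add_one D (a - 1) (3 * k + 2)
  have hend : a - 1 + ((3 * k + 2 : ℕ) : ℤ) = a + (3 * k + 1) := by push_cast; ring
  rw [sub_add_cancel, hend] at hstep
  have hleft_le := indicator_one_le_one D (a - 1)
  have hright_nonneg := indicator_one_nonneg D (a + (3 * k + 1))
  have hleft : a - 1 ∈ D := by
    by_contra h
    rw [Set.indicator_of_notMem h] at hstep
    omega
  have hright : a + (3 * k + 1) ∉ D := fun h => by
    rw [(Set.indicator_eq_one_iff_mem ℤ).2 h] at hstep
    omega
  obtain ⟨m, ⟨ham, hma⟩, hm⟩ := hD.exists_two_le_dominationCount (by omega) hleft hright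
  have hlt := hD.lt_windowCount_add (n := 3 * k + 2) ⟨ham, by push_cast; omega⟩ hm
  push_cast at hlt
  omega

lemma Dominating.le_windowSum_windowCount (hD : Dominating {1, 3 * (k : ℤ) + 1} D)
    (x : ℤ) (n : ℕ) :
    ((k : ℤ) + 1) * n - (3 * k + 1) * (3 * k + 2)
      ≤ windowSum (fun a => windowCount D a (3 * k + 2)) x n := by
  have hbound (a : ℤ) : windowCount D a (3 * k + 2) - (k + 1) ≤ 3 * k + 2 := by
    have := windowCount_le D a (3 * k + 2)
    push_cast at this
    omega
  have hsum := neg_nsmul_le_windowSum hbound (3 * k + 1)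
    (fun a ha => by
      have := hD.le_windowCount_add_windowCount (sub_neg.1 ha)
      push_cast
      linarith) x n
  rw [windowSum_sub_fun, windowSum_const, nsmul_eq_mul, nsmul_eq_mul] at hsum
  push_cast at hsum
  linarith

lemma Dominating.div_le_lowerDensity (hD : Dominating {1, 3 * (k : ℤ) + 1} D) :
    ((k : ℝ) + 1) / (3 * (k : ℝ) + 2) ≤ lowerDensity D := by
  simpa using div_le_lowerDensity_of_le_windowSum (by omega) hD.le_windowSum_windowCount

end LowerBound

section Construction

/-- The integers whose residue modulo `3 * k + 2` is one of `0, 3, …, 3 * k`: an optimal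
dominating set of `Γ(ℤ, {1, 3 * k + 1})`. -/
def residueMultiplesOfThree (k : ℕ) : Set ℤ := {x | 3 ∣ x % (3 * k + 2)}

variable {k : ℕ}

lemma mul_add_mem_residueMultiplesOfThree_iff {c r : ℤ} (h0 : 0 ≤ r) (hr : r < 3 * k + 2) :
    (3 * k + 2) * c + r ∈ residueMultiplesOfThree k ↔ 3 ∣ r := by
  simp [residueMultiplesOfThree, Int.emod_eq_of_lt h0 hr]

lemma natCast_mem_residueMultiplesOfThree_iff {i : ℕ} (hi : i < 3 * k + 2) :
    (i : ℤ) ∈ residueMultiplesOfThree k ↔ i ≡ 0 [MOD 3] := by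
  have h := mul_add_mem_residueMultiplesOfThree_iff (k := k) (c := 0) (r := i) (by omega) (by omega)
  rw [mul_zero, zero_add] at h
  rw [h, Nat.modEq_zero_iff_dvd]
  omega

/-- Modulo `3 * k + 2` the step `3 * k + 1` is `-1`, so each element dominates both neighbours. -/
lemma dominating_residueMultiplesOfThree (k : ℕ) :
    Dominating {1, 3 * (k : ℤ) + 1} (residueMultiplesOfThree k) := by
  rw [dominating_pair_iff]
  intro m
  have hn : 0 < 3 * (k : ℤ) + 2 := by positivity
  obtain ⟨c, r, h0, hr, rfl⟩ : ∃ c r, 0 ≤ r ∧ r < 3 * (k : ℤ) + 2 ∧ m = (3 * k + 2) * c + r :=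
    ⟨_, _, Int.emod_nonneg m hn.ne', Int.emod_lt_of_pos m hn, (Int.mul_ediv_add_emod m _).symm⟩
  have hprev : (3 * k + 2) * c + r - 1 = (3 * k + 2) * c + (r - 1) := by ring
  have hnext : (3 * k + 2) * c + r - (3 * k + 1) = (3 * k + 2) * (c - 1) + (r + 1) := by ring
  rw [hprev, hnext]
  obtain h | h | h : r % 3 = 0 ∨ r % 3 = 1 ∨ r % 3 = 2 := by omega
  · exact .inl ((mul_add_mem_residueMultiplesOfThree_iff h0 hr).2 (by omega))
  · exact .inr (.inl ((mul_add_mem_residueMultiplesOfThree_iff (by omega) (by omega)).2 (by omega)))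
  · exact .inr (.inr ((mul_add_mem_residueMultiplesOfThree_iff (by omega) (by omega)).2 (by omega)))

lemma periodic_indicator_residueMultiplesOfThree (k : ℕ) :
    Function.Periodic ((residueMultiplesOfThree k).indicator (1 : ℤ → ℤ)) (3 * k + 2 : ℕ) := by
  intro x
  simp [Set.indicator_apply, residueMultiplesOfThree]

lemma windowCount_residueMultiplesOfThree (k : ℕ) (x : ℤ) :
    windowCount (residueMultiplesOfThree k) x (3 * k + 2) = k + 1 := by
  classical
  have hindicator : ∀ i ∈ Finset.range (3 * k + 2),
      (residueMultiplesOfThree k).indicator (1 : ℤ → ℤ) (0 + i) =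
        if i ≡ 0 [MOD 3] then 1 else 0 := fun i hi => by
    simp [Set.indicator_apply,
      natCast_mem_residueMultiplesOfThree_iff (Finset.mem_range.1 hi)]
  calc windowCount (residueMultiplesOfThree k) x (3 * k + 2)
      = windowSum ((residueMultiplesOfThree k).indicator 1) 0 (3 * k + 2) :=
        windowSum_eq_of_periodic (periodic_indicator_residueMultiplesOfThree k) x 0
    _ = (Nat.count (· ≡ 0 [MOD 3]) (3 * k + 2) : ℤ) := by
        rw [windowSum, Finset.sum_congr rfl hindicator, Nat.count_eq_card_filter_range,
          Finset.natCast_card_filter]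
    _ = k + 1 := by
        rw [Nat.count_modEq_card _ three_pos, if_pos (by omega)]
        omega

lemma lowerDensity_residueMultiplesOfThree_le (k : ℕ) :
    lowerDensity (residueMultiplesOfThree k) ≤ ((k : ℝ) + 1) / (3 * (k : ℝ) + 2) := by
  simpa using lowerDensity_le_div_of_windowCount_le (by omega)
    fun x => (windowCount_residueMultiplesOfThree k x).le

end Construction

lemma isLeast_lowerDensity_dominating (k : ℕ) :
    IsLeast (lowerDensity '' {D | Dominating {1, 3 * (k : ℤ) + 1} D})
      (((k : ℝ) + 1) / (3 * (k : ℝ) + 2)) := by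
  have hdom := dominating_residueMultiplesOfThree k
  exact ⟨⟨_, hdom, (lowerDensity_residueMultiplesOfThree_le k).antisymm hdom.div_le_lowerDensity⟩,
    Set.forall_mem_image.2 fun _ hD => hD.div_le_lowerDensity⟩

theorem stmt_10 (k : ℤ) (hk : 1 ≤ k) :
    dominationRatio {1, 3 * k + 1} = ((k : ℝ) + 1) / (3 * (k : ℝ) + 2) ∧
      dominationRatio {1, -3 * k} = ((k : ℝ) + 1) / (3 * (k : ℝ) + 2) := by
  lift k to ℕ using by omega
  rw [Int.cast_natCast]
  have hpos : dominationRatio {1, 3 * (k : ℤ) + 1} = ((k : ℝ) + 1) / (3 * (k : ℝ) + 2) :=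
    (isLeast_lowerDensity_dominating k).csInf_eq
  have hreflect : -3 * (k : ℤ) = 1 - (3 * k + 1) := by ring
  exact ⟨hpos, by rw [hreflect, dominationRatio_pair_sub, hpos]⟩
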